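/- Fix the number of agents n ≥ 1 and consider the FI model with the Borda scoring vector s_i = m - i + 1. For m items and a vector k of nonnegative integers summing to m, let EU^k(a) denote the expected utility of agent a under the non-interleaving picking sequence k, and let K*_m be the set of vectors k maximizing min_a EU^k(a). Then for every ε > 0 there exists M such that for all m ≥ M there EXISTS k ∈ K*_m with ( max_a EU^k(a) - min_a EU^k(a) ) / ( Σ_a EU^k(a) ) < ε. -/

import Mathlib

/-- The `k` most preferred items of `S` under the ranking `σ` (where `σ r` is the item of
0-based rank `r`, so `σ.symm x` is the rank of item `x`): the items of `S` having fewer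
than `k` strictly better items inside `S`. -/
def topk {m : ℕ} (σ : Fin m ≃ Fin m) (S : Finset (Fin m)) (k : ℕ) : Finset (Fin m) :=
  S.filter fun x => (S.filter fun y => σ.symm y < σ.symm x).card < k

/-- Items remaining before the `i`-th agent (0-based) picks, under profile `P` (agent `i`
has ranking `P i`) and pick-count vector `k` (agent `i` picks `k i` items). -/
def remaining {m : ℕ} (P : ℕ → Fin m ≃ Fin m) (k : ℕ → ℕ) : ℕ → Finset (Fin m)
  | 0 => Finset.univ
  | i + 1 => remaining P k i \ topk (P i) (remaining P k i) (k i)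

/-- The set of items greedily picked by the `i`-th agent (0-based). -/
def alloc {m : ℕ} (P : ℕ → Fin m ≃ Fin m) (k : ℕ → ℕ) (i : ℕ) : Finset (Fin m) :=
  topk (P i) (remaining P k i) (k i)

/-- The utility of the `i`-th agent (0-based): the sum of the scores `s r` over the
1-based ranks `r` (in her own ranking) of the items she receives. -/
noncomputable def util {m : ℕ} (s : ℕ → ℝ) (P : ℕ → Fin m ≃ Fin m) (k : ℕ → ℕ)
    (i : ℕ) : ℝ :=
  ∑ x ∈ alloc P k i, s (((P i).symm x : ℕ) + 1)

/-- Extend a profile on `Fin n` to a profile indexed by `ℕ` (agents `≥ n` are irrelevant). -/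
def extendProfile {m : ℕ} (n : ℕ) (Q : Fin n → Fin m ≃ Fin m) : ℕ → Fin m ≃ Fin m :=
  fun i => if h : i < n then Q ⟨i, h⟩ else Equiv.refl _

/-- Expected utility of the `i`-th agent (0-based) in the full independence model. -/
noncomputable def EUFI (n m : ℕ) (s : ℕ → ℝ) (k : ℕ → ℕ) (i : ℕ) : ℝ :=
  (∑ Q : Fin n → Fin m ≃ Fin m, util s (extendProfile n Q) k i) /
    (Fintype.card (Fin n → Fin m ≃ Fin m) : ℝ)

/-- The Borda scoring vector for `m` items: `s_j = m - j + 1`. -/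
noncomputable def bordaScore (m : ℕ) : ℕ → ℝ := fun j => ((m + 1 - j : ℕ) : ℝ)

/-!
A picked item `x` has as Borda score the number of items `z` that are no better than `x`; exchanging
the sums, an agent's utility is the sum over all `z` of `min k c`, where `c` counts the remaining
items at least as good as `z`. Averaged over the rankings, the expected utility is `m + 1` times a
share that depends only on the number `k` of picks and the number `r` of remaining items.

Among the optimal vectors, take one that maximizes the number of picks of the last agent. If another
agent's share exceeded the minimum by more than `1`, she could pass one item on to the last agent
without lowering the minimum. If the share of the last agent exceeded it by more than a constant,
she could hand out geometrically growing numbers of items, which raises every other share and hence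
the minimum. So all shares are within a constant `C`, independent of `m`, of the minimum, while
their sum is at least `m / 2`.
-/

section

open Finset Function

section Ranks

variable {α β M : Type*} [LinearOrder β] [AddCommMonoid M]

lemma filter_lt_insert {f : α → β} (hf : Injective f) [DecidableEq α] {T : Finset α} {z : α}
    (hz : z ∉ T) : {y ∈ insert z T | f y < f z} = {y ∈ T | f y ≤ f z} := by
  rw [filter_insert, if_neg (lt_irrefl _)]
  refine filter_congr fun y hy => ⟨le_of_lt, fun h => h.lt_of_ne ?_⟩
  exact hf.ne (ne_of_mem_of_not_mem hy hz)

lemma card_filter_le_eq_add_one {f : α → β} (hf : Injective f) {T : Finset α} {z : α}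
    (hz : z ∈ T) : #{y ∈ T | f y ≤ f z} = #{y ∈ T | f y < f z} + 1 := by
  classical
  have hinsert : {y ∈ T | f y ≤ f z} = insert z {y ∈ T | f y < f z} := by
    ext y
    simp only [mem_filter, mem_insert, le_iff_lt_or_eq, hf.eq_iff]
    grind
  rw [hinsert, card_insert_of_notMem (by simp)]

lemma sum_card_filter_lt {f : α → β} (hf : Injective f) (T : Finset α) (φ : ℕ → M) :
    ∑ z ∈ T, φ #{y ∈ T | f y < f z} = ∑ p ∈ range #T, φ p := by
  classical
  induction T using induction_on_max_value f with
  | empty => simp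
  | insert a T ha hmax ih =>
    have hlt : ∀ y ∈ T, f y < f a := fun y hy =>
      (hmax y hy).lt_of_ne (hf.ne (ne_of_mem_of_not_mem hy ha))
    have hold : ∀ z ∈ T, {y ∈ insert a T | f y < f z} = {y ∈ T | f y < f z} := fun z hz => by
      rw [filter_insert, if_neg (hlt z hz).not_gt]
    rw [sum_insert ha, filter_lt_insert hf ha, filter_true_of_mem hmax,
      sum_congr rfl fun z hz => by rw [hold z hz], ih, card_insert_of_notMem ha, sum_range_succ,
      add_comm]

lemma card_smul_sum_equiv_card_filter_lt [Fintype α] [DecidableEq α] [Fintype β]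
    {T : Finset α} {z : α} (hz : z ∈ T) (φ : ℕ → M) :
    #T • ∑ e : α ≃ β, φ #{y ∈ T | e y < e z} =
      Fintype.card (α ≃ β) • ∑ p ∈ range #T, φ p := by
  have hsymm : ∀ w ∈ T, ∑ e : α ≃ β, φ #{y ∈ T | e y < e w} =
      ∑ e : α ≃ β, φ #{y ∈ T | e y < e z} := fun w hw => by
    refine Fintype.sum_equiv ((Equiv.swap w z).equivCongr (Equiv.refl β)) _ _ fun e => ?_
    congr 1
    refine card_equiv (Equiv.swap w z) fun y => ?_
    have hT : Equiv.swap w z y ∈ T ↔ y ∈ T := by grind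
    simp [hT]
  calc #T • ∑ e : α ≃ β, φ #{y ∈ T | e y < e z}
      = ∑ w ∈ T, ∑ e : α ≃ β, φ #{y ∈ T | e y < e w} := by rw [sum_congr rfl hsymm, sum_const]
    _ = ∑ _e : α ≃ β, ∑ p ∈ range #T, φ p := by
      rw [sum_comm]
      exact sum_congr rfl fun e _ => sum_card_filter_lt e.injective T φ
    _ = Fintype.card (α ≃ β) • ∑ p ∈ range #T, φ p := by rw [sum_const, card_univ]

end Ranks

lemma sum_sum_update {ι M : Type*} {α : ι → Type*} [Fintype ι] [DecidableEq ι]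
    [∀ i, Fintype (α i)] [AddCommMonoid M] (f : (∀ i, α i) → M) (i : ι) :
    ∑ Q, ∑ a, f (update Q i a) = Fintype.card (α i) • ∑ Q, f Q := by
  let exchange : (∀ i, α i) × α i → (∀ i, α i) × α i := fun x => (update x.1 i x.2, x.1 i)
  have hexchange : Involutive exchange := fun x => by simp [exchange]
  calc ∑ Q, ∑ a, f (update Q i a)
      = ∑ x, f (exchange x).1 := (Fintype.sum_prod_type fun x => f (exchange x).1).symm
    _ = ∑ x : (∀ i, α i) × α i, f x.1 := Equiv.sum_comp hexchange.toPerm fun x => f x.1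
    _ = Fintype.card (α i) • ∑ Q, f Q := by
      simp [Fintype.sum_prod_type, ← sum_nsmul]

lemma exists_sum_eq_and_forall_le {ι γ : Type*} [LinearOrder γ] {s : Finset ι} (hs : s.Nonempty)
    (m : ℕ) {f : (ι → ℕ) → γ} (hf : DependsOn f (s : Set ι)) :
    ∃ k : ι → ℕ, ∑ i ∈ s, k i = m ∧ ∀ k' : ι → ℕ, ∑ i ∈ s, k' i = m → f k' ≤ f k := by
  classical
  obtain ⟨i, hi⟩ := hs
  have hne : (piAntidiag s m).Nonempty := ⟨Pi.single i m, by simp [hi, Pi.single_apply]⟩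
  obtain ⟨k, hk, hmax⟩ := exists_max_image _ f hne
  refine ⟨k, (mem_piAntidiag.1 hk).1, fun k' hk' => ?_⟩
  have hrestrict : f (s.piecewise k' 0) = f k' := hf fun j hj => s.piecewise_eq_of_mem _ _ hj
  rw [← hrestrict]
  refine hmax _ (mem_piAntidiag.2 ⟨?_, fun j hj => ?_⟩)
  · rw [← hk']
    exact sum_congr rfl fun j hj => s.piecewise_eq_of_mem _ _ hj
  · by_contra hjs
    exact hj (s.piecewise_eq_of_notMem _ _ hjs)

lemma exists_eq_add_single {ι : Type*} [DecidableEq ι] {k : ι → ℕ} {i : ι} {a : ℕ}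
    (h : a ≤ k i) : ∃ l : ι → ℕ, k = l + Pi.single i a := by
  refine le_iff_exists_add'.1 fun j => ?_
  obtain rfl | hj := eq_or_ne j i
  · simpa
  · simp [hj]

section Share

/-- Expected Borda utility, divided by `m + 1`, of an agent who picks her best `k` of `r`
remaining items out of `m`. The quotient does not depend on `m`. -/
noncomputable def bordaShare (k r : ℝ) : ℝ := k * (2 * r + 1 - k) / (2 * (r + 1))

lemma sum_range_min_eq_mul_bordaShare {k r : ℕ} (h : k ≤ r) :
    ∑ p ∈ range (r + 1), ((min k p : ℕ) : ℝ) = (r + 1) * bordaShare k r := by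
  have hclosed : ∑ p ∈ range (r + 1), ((min k p : ℕ) : ℝ) = k * (2 * r + 1 - k) / 2 := by
    induction r, h using Nat.le_induction with
    | base =>
      have hmin : ∀ p ∈ range (k + 1), ((min k p : ℕ) : ℝ) = p := fun p hp => by
        rw [min_eq_right (mem_range_succ_iff.1 hp)]
      have hgauss := sum_range_id_mul_two (k + 1)
      rw [Nat.add_sub_cancel, ← Nat.cast_inj (R := ℝ)] at hgauss
      push_cast at hgauss
      rw [sum_congr rfl hmin]
      linear_combination hgauss / 2
    | succ r hkr ih =>
      rw [sum_range_succ, ih, min_eq_left (by omega)]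
      push_cast
      ring
  rw [hclosed, bordaShare]
  field_simp

variable {k r : ℝ}

lemma bordaShare_self (hr : 0 ≤ r) : bordaShare r r = r / 2 := by
  rw [bordaShare]
  field_simp
  ring

lemma half_le_bordaShare (hk : 0 ≤ k) (hkr : k ≤ r) : k / 2 ≤ bordaShare k r := by
  have hr : 0 < r + 1 := by linarith
  rw [bordaShare, div_le_div_iff₀ two_pos (by positivity)]
  nlinarith

lemma bordaShare_eq_sub (hr : 0 ≤ r) :
    bordaShare k r = k - k * (k + 1) / (2 * (r + 1)) := by
  rw [bordaShare]
  field_simp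
  ring

lemma bordaShare_mono_right {r' : ℝ} (hk : 0 ≤ k) (hr : 0 ≤ r) (h : r ≤ r') :
    bordaShare k r ≤ bordaShare k r' := by
  rw [bordaShare_eq_sub hr, bordaShare_eq_sub (hr.trans h)]
  gcongr

lemma bordaShare_add_one_le (hk : 0 ≤ k) (hr : 0 ≤ r) :
    bordaShare (k + 1) r ≤ bordaShare k r + 1 := by
  have hinc : bordaShare k r + 1 - bordaShare (k + 1) r = (k + 1) / (r + 1) := by
    rw [bordaShare, bordaShare]
    field_simp
    ring
  have hnonneg : 0 ≤ (k + 1) / (r + 1) := by positivity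
  linarith

lemma bordaShare_add_right_le {D : ℝ} (hk : 0 ≤ k) (hkr : k ≤ r) (hD : 0 ≤ D) :
    bordaShare k (r + D) ≤ bordaShare k r + D / 2 := by
  have hr : 0 ≤ r := hk.trans hkr
  have hloss : bordaShare k (r + D) - bordaShare k r =
      D / 2 * (k * (k + 1) / ((r + 1) * (r + D + 1))) := by
    rw [bordaShare, bordaShare]
    field_simp
    ring
  have hfactor : k * (k + 1) / ((r + 1) * (r + D + 1)) ≤ 1 := by
    rw [div_le_one (by positivity)]
    gcongr <;> linarith
  linarith [mul_le_of_le_one_right (div_nonneg hD zero_le_two) hfactor]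

lemma add_mul_le_bordaShare_add {d δ : ℝ} (hr : 0 ≤ r) (hd : 0 ≤ d)
    (h : δ * (r + 1) ≤ r - (k + d)) : bordaShare k r + δ * d ≤ bordaShare (k + d) r := by
  have hgain : bordaShare (k + d) r - bordaShare k r =
      (2 * r + 1 - 2 * k - d) / (2 * (r + 1)) * d := by
    rw [bordaShare, bordaShare]
    field_simp
    ring
  have hrate : δ ≤ (2 * r + 1 - 2 * k - d) / (2 * (r + 1)) := by
    rw [le_div_iff₀ (by positivity)]
    linarith
  linarith [mul_le_mul_of_nonneg_right hrate hd]

/-- Conceding `D` items to earlier agents costs at most half a unit each, while every one of `d`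
additional picks gains at least `δ`. -/
lemma bordaShare_add_right_lt {d D δ : ℝ} (hk : 0 ≤ k) (hr : 0 ≤ r) (hd : 0 ≤ d) (hD : 0 ≤ D)
    (hδ : 0 ≤ δ) (hroom : δ * (r + 1) ≤ r - (k + d)) (hDd : D < 2 * δ * d) :
    bordaShare k (r + D) < bordaShare (k + d) r := by
  have hkr : k ≤ r := by linarith [mul_nonneg hδ (add_nonneg hr zero_le_one)]
  linarith [bordaShare_add_right_le hk hkr hD, add_mul_le_bordaShare_add hr hd hroom]

end Share

section Counting

variable {m : ℕ}

lemma topk_subset (σ : Fin m ≃ Fin m) (S : Finset (Fin m)) (k : ℕ) : topk σ S k ⊆ S :=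
  filter_subset _ _

lemma card_topk (σ : Fin m ≃ Fin m) (S : Finset (Fin m)) (k : ℕ) :
    #(topk σ S k) = min k #S := by
  have hrange : {p ∈ range #S | p < k} = range (min k #S) := by
    ext p
    simp [and_comm]
  rw [topk, card_filter, sum_card_filter_lt σ.symm.injective S fun p => if p < k then 1 else 0,
    ← card_filter, hrange, card_range]

lemma filter_le_topk (σ : Fin m ≃ Fin m) (S : Finset (Fin m)) (k : ℕ) (z : Fin m) :
    {x ∈ topk σ S k | σ.symm x ≤ σ.symm z} = topk σ {y ∈ S | σ.symm y ≤ σ.symm z} k := by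
  rw [topk, topk, filter_filter, filter_filter]
  refine filter_congr fun x _ => ?_
  rw [and_comm]
  refine and_congr_right fun hx => ?_
  rw [filter_filter, filter_congr fun y _ => and_iff_right_of_imp fun h => (h.trans_le hx).le]

lemma bordaScore_symm_add_one (σ : Fin m ≃ Fin m) (x : Fin m) :
    bordaScore m ((σ.symm x : ℕ) + 1) = #{z | σ.symm x ≤ σ.symm z} := by
  have hcard : #{z | σ.symm x ≤ σ.symm z} = #(Ici (σ.symm x)) :=
    card_equiv σ.symm fun z => by simp
  rw [hcard, Fin.card_Ici, bordaScore, Nat.add_sub_add_right]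

lemma sum_bordaScore_topk (σ : Fin m ≃ Fin m) (S : Finset (Fin m)) (k : ℕ) :
    ∑ x ∈ topk σ S k, bordaScore m ((σ.symm x : ℕ) + 1) =
      ∑ z, ((min k #{y ∈ S | σ.symm y ≤ σ.symm z} : ℕ) : ℝ) := by
  simp_rw [bordaScore_symm_add_one, ← card_topk σ, ← filter_le_topk]
  exact_mod_cast sum_card_bipartiteAbove_eq_sum_card_bipartiteBelow
    fun x z => σ.symm x ≤ σ.symm z

lemma sum_mem_min_card_filter_le {α β : Type*} [LinearOrder β] {f : α → β} (hf : Injective f)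
    {S : Finset α} {k : ℕ} (hk : k ≤ #S) :
    ∑ z ∈ S, ((min k #{y ∈ S | f y ≤ f z} : ℕ) : ℝ) = (#S + 1) * bordaShare k #S := by
  rw [sum_congr rfl fun z hz => by rw [card_filter_le_eq_add_one hf hz],
    sum_card_filter_lt hf S fun p => ((min k (p + 1) : ℕ) : ℝ),
    ← sum_range_min_eq_mul_bordaShare hk, sum_range_succ']
  simp

lemma sum_equiv_min_card_filter_le {α β : Type*} [Fintype α] [DecidableEq α] [LinearOrder β]
    [Fintype β] {S : Finset α} {k : ℕ} (hk : k ≤ #S) {z : α} (hz : z ∉ S) :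
    ∑ e : α ≃ β, ((min k #{y ∈ S | e y ≤ e z} : ℕ) : ℝ) =
      Fintype.card (α ≃ β) * bordaShare k #S := by
  have h := card_smul_sum_equiv_card_filter_lt (β := β) (mem_insert_self z S)
    fun p => ((min k p : ℕ) : ℝ)
  simp_rw [filter_lt_insert (Equiv.injective _) hz] at h
  rw [card_insert_of_notMem hz, sum_range_min_eq_mul_bordaShare hk, nsmul_eq_mul, nsmul_eq_mul,
    Nat.cast_succ, mul_left_comm] at h
  exact mul_left_cancel₀ (by positivity) h

lemma sum_perm_bordaScore_topk {S : Finset (Fin m)} {k : ℕ} (hk : k ≤ #S) :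
    ∑ σ : Fin m ≃ Fin m, ∑ x ∈ topk σ S k, bordaScore m ((σ.symm x : ℕ) + 1) =
      Fintype.card (Fin m ≃ Fin m) * ((m + 1) * bordaShare k #S) := by
  let c (e : Fin m ≃ Fin m) (z : Fin m) : ℝ := (min k #{y ∈ S | e y ≤ e z} : ℕ)
  have hmem : ∀ e, ∑ z ∈ S, c e z = (#S + 1) * bordaShare k #S := fun e =>
    sum_mem_min_card_filter_le e.injective hk
  have hcompl : ∀ z ∈ Sᶜ, ∑ e, c e z = Fintype.card (Fin m ≃ Fin m) * bordaShare k #S :=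
    fun z hz => sum_equiv_min_card_filter_le hk (mem_compl.1 hz)
  calc ∑ σ : Fin m ≃ Fin m, ∑ x ∈ topk σ S k, bordaScore m ((σ.symm x : ℕ) + 1)
      = ∑ σ : Fin m ≃ Fin m, ∑ z, c σ.symm z := sum_congr rfl fun σ _ => sum_bordaScore_topk σ S k
    _ = ∑ e, ∑ z, c e z := Equiv.sum_comp (Equiv.symmEquiv (Fin m) (Fin m)) fun e => ∑ z, c e z
    _ = ∑ e, ∑ z ∈ S, c e z + ∑ z ∈ Sᶜ, ∑ e, c e z := by
      simp_rw [← sum_add_sum_compl S (c _), sum_add_distrib]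
      rw [sum_comm (t := Sᶜ)]
    _ = Fintype.card (Fin m ≃ Fin m) * ((m + 1) * bordaShare k #S) := by
      rw [sum_congr rfl fun e _ => hmem e, sum_congr rfl hcompl, sum_const, sum_const, card_univ,
        card_compl, Fintype.card_fin, nsmul_eq_mul, nsmul_eq_mul,
        Nat.cast_sub (card_finset_fin_le S)]
      ring

end Counting

section FullIndependence

variable {n m : ℕ}

lemma card_remaining (P : ℕ → Fin m ≃ Fin m) (k : ℕ → ℕ) (i : ℕ) :
    #(remaining P k i) = m - ∑ j ∈ range i, k j := by
  induction i with
  | zero => simp [remaining]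
  | succ i ih =>
    rw [remaining, card_sdiff_of_subset (topk_subset _ _ _), card_topk, ih, sum_range_succ]
    omega

lemma remaining_update (P : ℕ → Fin m ≃ Fin m) (k : ℕ → ℕ) {i j : ℕ} (hij : i ≤ j)
    (σ : Fin m ≃ Fin m) : remaining (update P j σ) k i = remaining P k i := by
  induction i with
  | zero => rfl
  | succ i ih =>
    rw [remaining, remaining, ih (by omega), update_of_ne (by omega)]

lemma extendProfile_update (Q : Fin n → Fin m ≃ Fin m) (i : Fin n) (σ : Fin m ≃ Fin m) :
    extendProfile n (update Q i σ) = update (extendProfile n Q) i σ := by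
  ext1 j
  obtain rfl | hj := eq_or_ne j i
  · simp [extendProfile]
  · have hj' : ∀ h : j < n, ⟨j, h⟩ ≠ i := fun _ h => hj (congrArg Fin.val h)
    simp [extendProfile, hj, hj']

lemma util_extendProfile_update (s : ℕ → ℝ) (Q : Fin n → Fin m ≃ Fin m) (k : ℕ → ℕ) (i : Fin n)
    (σ : Fin m ≃ Fin m) :
    util s (extendProfile n (update Q i σ)) k i =
      ∑ x ∈ topk σ (remaining (extendProfile n Q) k i) (k i), s ((σ.symm x : ℕ) + 1) := by
  rw [util, alloc, extendProfile_update, update_self, remaining_update _ _ le_rfl]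

/-- Expected Borda utility, divided by the number of items plus one, of agent `i` among `n` agents
under the picking vector `k`. When her turn comes, `∑ j ∈ Ico i n, k j` items remain. -/
noncomputable def pickShare (n : ℕ) (k : ℕ → ℕ) (i : ℕ) : ℝ :=
  bordaShare (k i) (∑ j ∈ Ico i n, k j : ℕ)

lemma le_sum_Ico {k : ℕ → ℕ} {i : ℕ} (hi : i < n) : k i ≤ ∑ j ∈ Ico i n, k j :=
  single_le_sum_of_canonicallyOrdered (left_mem_Ico.2 hi)

theorem EUFI_bordaScore {k : ℕ → ℕ} (hk : ∑ j ∈ range n, k j = m) {i : ℕ} (hi : i < n) :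
    EUFI n m (bordaScore m) k i = (m + 1) * pickShare n k i := by
  have hcard : ∀ P : ℕ → Fin m ≃ Fin m, #(remaining P k i) = ∑ j ∈ Ico i n, k j := fun P => by
    rw [card_remaining, ← hk, ← sum_range_add_sum_Ico k hi.le, Nat.add_sub_cancel_left]
  have hresample : ∀ Q : Fin n → Fin m ≃ Fin m,
      ∑ σ, util (bordaScore m) (extendProfile n (update Q ⟨i, hi⟩ σ)) k i =
        Fintype.card (Fin m ≃ Fin m) * ((m + 1) * pickShare n k i) := fun Q => by
    have hle : k i ≤ #(remaining (extendProfile n Q) k i) := (hcard _).symm ▸ le_sum_Ico hi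
    rw [sum_congr rfl fun σ _ => util_extendProfile_update _ Q k ⟨i, hi⟩ σ,
      sum_perm_bordaScore_topk hle, hcard, pickShare]
  have hdouble := sum_sum_update
    (fun Q : Fin n → Fin m ≃ Fin m => util (bordaScore m) (extendProfile n Q) k i) ⟨i, hi⟩
  rw [sum_congr rfl fun Q _ => hresample Q, sum_const, nsmul_eq_mul, nsmul_eq_mul, card_univ,
    mul_left_comm] at hdouble
  rw [EUFI, div_eq_iff (by positivity), mul_comm, mul_left_cancel₀ (by positivity) hdouble]

end FullIndependence

section Egalitarian

variable {n N m : ℕ} {k k' : ℕ → ℕ} {i : ℕ}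

lemma half_le_pickShare (hi : i < n) : (k i : ℝ) / 2 ≤ pickShare n k i :=
  half_le_bordaShare (by positivity) (by exact_mod_cast le_sum_Ico hi)

lemma pickShare_last (N : ℕ) (k : ℕ → ℕ) : pickShare (N + 1) k N = k N / 2 := by
  rw [pickShare, Nat.Ico_succ_singleton, sum_singleton, bordaShare_self (by positivity)]

lemma pickShare_mono (hk : k i = k' i) (h : ∑ j ∈ Ico i n, k j ≤ ∑ j ∈ Ico i n, k' j) :
    pickShare n k i ≤ pickShare n k' i := by
  rw [pickShare, pickShare, hk]
  exact bordaShare_mono_right (by positivity) (by positivity) (by exact_mod_cast h)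

lemma dependsOn_pickShare (hi : i < n) : DependsOn (pickShare n · i) (range n : Set ℕ) := by
  intro k k' h
  have hsum : ∑ j ∈ Ico i n, k j = ∑ j ∈ Ico i n, k' j := sum_congr rfl fun j hj =>
    h j (by simpa using (mem_Ico.1 hj).2)
  simp only [pickShare, hsum, h i (by simpa using hi)]

/-- The egalitarian welfare `min_a EU^k(a)`, divided by the number of items plus one, of the
picking vector `k` for `N + 1` agents. -/
noncomputable def minShare (N : ℕ) (k : ℕ → ℕ) : ℝ :=
  (range (N + 1)).inf' nonempty_range_add_one (pickShare (N + 1) k)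

lemma le_minShare_iff {v : ℝ} : v ≤ minShare N k ↔ ∀ i ≤ N, v ≤ pickShare (N + 1) k i := by
  simp [minShare]

lemma lt_minShare_iff {v : ℝ} : v < minShare N k ↔ ∀ i ≤ N, v < pickShare (N + 1) k i := by
  simp [minShare]

lemma minShare_le (k : ℕ → ℕ) (hi : i ≤ N) : minShare N k ≤ pickShare (N + 1) k i :=
  le_minShare_iff.1 le_rfl i hi

lemma minShare_nonneg (N : ℕ) (k : ℕ → ℕ) : 0 ≤ minShare N k :=
  le_minShare_iff.2 fun _ hi =>
    le_trans (by positivity) (half_le_pickShare (Nat.lt_succ_of_le hi))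

lemma dependsOn_minShare : DependsOn (minShare N) (range (N + 1) : Set ℕ) := fun _ _ h =>
  inf'_congr _ rfl fun _ hi => dependsOn_pickShare (mem_range.1 hi) h

lemma inf'_EUFI_bordaScore (hk : ∑ j ∈ range (N + 1), k j = m) :
    (range (N + 1)).inf' nonempty_range_add_one (EUFI (N + 1) m (bordaScore m) k) =
      (m + 1) * minShare N k := by
  rw [inf'_congr _ rfl fun i hi => EUFI_bordaScore hk (mem_range.1 hi)]
  exact (map_finset_inf' (OrderIso.mulLeft₀ ((m : ℝ) + 1) (by positivity)) _ _).symm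

lemma sup'_EUFI_bordaScore_le (hk : ∑ j ∈ range (N + 1), k j = m) {v : ℝ}
    (h : ∀ i ≤ N, pickShare (N + 1) k i ≤ v) :
    (range (N + 1)).sup' nonempty_range_add_one (EUFI (N + 1) m (bordaScore m) k) ≤
      (m + 1) * v := by
  refine sup'_le _ _ fun i hi => ?_
  rw [EUFI_bordaScore hk (mem_range.1 hi)]
  gcongr
  exact h i (mem_range_succ_iff.1 hi)

lemma exists_le_minShare (N m : ℕ) : ∃ k : ℕ → ℕ, ∑ j ∈ range (N + 1), k j = m ∧
    ((m : ℝ) / (N + 1) - 1) / 2 ≤ minShare N k := by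
  set q := m / (N + 1) with hq
  let k : ℕ → ℕ := fun j => q + (Pi.single N (m % (N + 1)) : ℕ → ℕ) j
  refine ⟨k, ?_, le_minShare_iff.2 fun i hi => ?_⟩
  · simp [k, sum_add_distrib, sum_pi_single', Nat.div_add_mod, q]
  · have hfloor : (m : ℝ) / (N + 1) < q + 1 := by
      rw [hq, ← Nat.floor_div_eq_div (K := ℝ), Nat.cast_succ]
      exact Nat.lt_floor_add_one _
    have hqk : (q : ℝ) ≤ k i := by exact_mod_cast Nat.le_add_right _ _
    linarith [half_le_pickShare (k := k) (Nat.lt_succ_of_le hi)]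

lemma pickShare_add_single_le (hi : i < N) (l : ℕ → ℕ) :
    pickShare (N + 1) (l + Pi.single i 1) i ≤ pickShare (N + 1) (l + Pi.single N 1) i + 1 := by
  have hsame : ∑ x ∈ Ico i (N + 1), (l + Pi.single i 1 : ℕ → ℕ) x =
      ∑ x ∈ Ico i (N + 1), (l + Pi.single N 1 : ℕ → ℕ) x := by
    simp [sum_add_distrib, sum_pi_single', hi.trans N.lt_succ_self, hi.le]
  rw [pickShare, pickShare, hsame, Pi.add_apply, Pi.add_apply, Pi.single_eq_same,
    Pi.single_eq_of_ne hi.ne, add_zero, Nat.cast_add_one]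
  exact bordaShare_add_one_le (by positivity) (by positivity)

lemma exists_transfer_to_last (hi : i < N) (h : minShare N k + 1 < pickShare (N + 1) k i) :
    ∃ k' : ℕ → ℕ, ∑ j ∈ range (N + 1), k' j = ∑ j ∈ range (N + 1), k j ∧
      minShare N k ≤ minShare N k' ∧ k N < k' N := by
  have hki : k i ≠ 0 := fun hzero => by
    have hshare : pickShare (N + 1) k i = 0 := by simp [pickShare, bordaShare, hzero]
    linarith [minShare_nonneg N k]
  obtain ⟨l, rfl⟩ := exists_eq_add_single (Nat.one_le_iff_ne_zero.2 hki)
  have htail : ∀ j, ∑ x ∈ Ico j (N + 1), (l + Pi.single i 1 : ℕ → ℕ) x ≤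
      ∑ x ∈ Ico j (N + 1), (l + Pi.single N 1 : ℕ → ℕ) x := fun j => by
    simp only [Pi.add_apply, sum_add_distrib, sum_pi_single', mem_Ico]
    grind
  refine ⟨l + Pi.single N 1, ?_, le_minShare_iff.2 fun j hj => ?_, by simp [hi.ne']⟩
  · simp [sum_add_distrib, sum_pi_single', hi.trans N.lt_succ_self]
  obtain rfl | hji := eq_or_ne j i
  · linarith [pickShare_add_single_le hi l]
  obtain rfl | hjN := eq_or_lt_of_le hj
  · refine (minShare_le _ le_rfl).trans ?_
    rw [pickShare_last, pickShare_last]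
    gcongr
    simp [hi.ne']
  · refine (minShare_le _ hj).trans (pickShare_mono ?_ (htail j))
    simp [hji, hjN.ne]

/-- The additional items handed to agent `j` when the last of `N + 1` agents shares her surplus.
The geometric growth compensates agent `j` for all the items handed to her predecessors. -/
def gift (N j : ℕ) : ℕ := if j < N then (N + 2) ^ j else 0

/-- The number of items the last agent gives up by handing out all gifts. -/
def totalGift (N : ℕ) : ℕ := ∑ j ∈ range (N + 1), gift N j

lemma sum_gift_mul_lt {j : ℕ} (hj : j < N) : (∑ x ∈ range j, gift N x) * (N + 1) < gift N j := by
  have hpow : ∑ x ∈ range j, gift N x = ∑ x ∈ range j, (N + 1 + 1) ^ x :=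
    sum_congr rfl fun x hx => if_pos ((mem_range.1 hx).trans hj)
  rw [hpow, gift, if_pos hj]
  exact (geom_sum_mul_add (N + 1) j).le

lemma pickShare_lt_pickShare_add_gift {l : ℕ → ℕ} {j : ℕ} (hj : j < N)
    (hroom : ∑ x ∈ range (N + 1), (l + gift N) x + 1 ≤ 2 * (N + 1) * l N) :
    pickShare (N + 1) (l + Pi.single N (totalGift N)) j < pickShare (N + 1) (l + gift N) j := by
  set r := ∑ x ∈ Ico j (N + 1), (l + gift N) x with hr
  have htail : ∑ x ∈ Ico j (N + 1), (l + Pi.single N (totalGift N) : ℕ → ℕ) x =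
      r + ∑ x ∈ range j, gift N x := by
    have hmem : N ∈ Ico j (N + 1) := mem_Ico.2 ⟨hj.le, N.lt_succ_self⟩
    simp only [hr, Pi.add_apply, sum_add_distrib, sum_pi_single', if_pos hmem, totalGift,
      ← sum_range_add_sum_Ico (gift N) (hj.le.trans N.le_succ)]
    ring
  have hle : r ≤ ∑ x ∈ range (N + 1), (l + gift N) x :=
    sum_le_sum_of_subset fun x hx => mem_range.2 (mem_Ico.1 hx).2
  have hlast : l j + gift N j + l N ≤ r := by
    rw [hr, sum_eq_sum_Ico_succ_bot (by omega), sum_Ico_succ_top hj]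
    simp [gift]
  have hgift : ((∑ x ∈ range j, gift N x : ℕ) : ℝ) * (N + 1) < gift N j := by
    exact_mod_cast sum_gift_mul_lt hj
  rw [pickShare, htail, pickShare, ← hr]
  simp only [Pi.add_apply, Pi.single_eq_of_ne hj.ne, add_zero, Nat.cast_add]
  refine bordaShare_add_right_lt (δ := 1 / (2 * (N + 1))) (by positivity) (by positivity)
    (by positivity) (by positivity) (by positivity) ?_ ?_
  · have hr_le : (r : ℝ) + 1 ≤ 2 * (N + 1) * l N := by exact_mod_cast (by omega)
    have hrate : 1 / (2 * (N + 1)) * ((r : ℝ) + 1) ≤ l N := by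
      rwa [one_div_mul_eq_div, div_le_iff₀' (by positivity)]
    have hpicks : (l j : ℝ) + gift N j + l N ≤ r := by exact_mod_cast hlast
    linarith
  · field_simp
    exact hgift

lemma exists_minShare_lt_of_lt_pickShare_last
    (hfair : ((∑ j ∈ range (N + 1), k j : ℕ) / (N + 1 : ℝ) - 1) / 2 ≤ minShare N k)
    (h : minShare N k + 1 + totalGift N / 2 < pickShare (N + 1) k N) :
    ∃ k' : ℕ → ℕ, ∑ j ∈ range (N + 1), k' j = ∑ j ∈ range (N + 1), k j ∧
      minShare N k < minShare N k' := by
  rw [pickShare_last] at h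
  have hsurplus : totalGift N ≤ k N := by
    rw [← Nat.cast_le (α := ℝ)]
    linarith [minShare_nonneg N k]
  obtain ⟨l, rfl⟩ := exists_eq_add_single hsurplus
  have hsum : ∑ j ∈ range (N + 1), (l + gift N) j =
      ∑ j ∈ range (N + 1), (l + Pi.single N (totalGift N) : ℕ → ℕ) j := by
    simp [sum_add_distrib, sum_pi_single', totalGift]
  have hlast : minShare N (l + Pi.single N (totalGift N)) + 1 < l N / 2 := by
    rw [Pi.add_apply, Pi.single_eq_same, Nat.cast_add] at h
    linarith
  have hroom : ∑ x ∈ range (N + 1), (l + gift N) x + 1 ≤ 2 * (N + 1) * l N := by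
    rw [← hsum] at hfair
    have havg : ((∑ j ∈ range (N + 1), (l + gift N) j : ℕ) : ℝ) / (N + 1) ≤ l N - 1 := by
      linarith
    rw [div_le_iff₀ (by positivity)] at havg
    rw [← Nat.cast_le (α := ℝ), Nat.cast_add_one]
    push_cast at havg ⊢
    nlinarith
  refine ⟨l + gift N, hsum, lt_minShare_iff.2 fun j hj => ?_⟩
  obtain rfl | hjN := eq_or_lt_of_le hj
  · rw [pickShare_last, Pi.add_apply, gift, if_neg (lt_irrefl j), add_zero]
    linarith
  · exact (minShare_le _ hj).trans_lt (pickShare_lt_pickShare_add_gift hjN hroom)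

theorem exists_egalitarian_optimum_pickShare_le (N m : ℕ) :
    ∃ k : ℕ → ℕ, ∑ j ∈ range (N + 1), k j = m ∧
      (∀ k' : ℕ → ℕ, ∑ j ∈ range (N + 1), k' j = m → minShare N k' ≤ minShare N k) ∧
      ∀ i ≤ N, pickShare (N + 1) k i ≤ minShare N k + (1 + totalGift N / 2) := by
  obtain ⟨k, rfl, hmax⟩ := exists_sum_eq_and_forall_le (s := range (N + 1))
    nonempty_range_add_one m (f := fun k => toLex (minShare N k, k N)) fun k k' h => by
      simp only [dependsOn_minShare h, h N (by simp)]
  have hopt : ∀ k' : ℕ → ℕ, ∑ j ∈ range (N + 1), k' j = ∑ j ∈ range (N + 1), k j →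
      minShare N k' ≤ minShare N k := fun k' hk' => Prod.Lex.monotone_fst _ _ (hmax k' hk')
  refine ⟨k, rfl, hopt, fun i hi => ?_⟩
  by_contra! hcon
  obtain rfl | hiN := eq_or_lt_of_le hi
  · obtain ⟨k₀, hk₀, hfair⟩ := exists_le_minShare i (∑ j ∈ range (i + 1), k j)
    obtain ⟨k', hk', hlt⟩ :=
      exists_minShare_lt_of_lt_pickShare_last (hfair.trans (hopt k₀ hk₀)) (by linarith)
    exact (hopt k' hk').not_gt hlt
  · have hlarge : minShare N k + 1 < pickShare (N + 1) k i :=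
      lt_of_le_of_lt (by gcongr; exact le_add_of_nonneg_right (by positivity)) hcon
    obtain ⟨k', hk', hge, hlt⟩ := exists_transfer_to_last hiN hlarge
    refine (hmax k' hk').not_gt (Prod.Lex.toLex_lt_toLex.2 ?_)
    exact hge.lt_or_eq.imp_right fun heq => ⟨heq, hlt⟩

lemma half_mul_le_sum_EUFI_bordaScore (hk : ∑ j ∈ range n, k j = m) :
    (m + 1) * ((m : ℝ) / 2) ≤ ∑ i ∈ range n, EUFI n m (bordaScore m) k i := by
  rw [sum_congr rfl fun i hi => EUFI_bordaScore hk (mem_range.1 hi), ← mul_sum]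
  have hhalf : (m : ℝ) / 2 = ∑ i ∈ range n, (k i : ℝ) / 2 := by
    rw [← sum_div, ← hk, Nat.cast_sum]
  rw [hhalf]
  gcongr with i hi
  exact half_le_pickShare (mem_range.1 hi)

end Egalitarian

end

/-- Fix `n ≥ 1` agents and consider the full independence model with the Borda scoring
vector `s_j = m - j + 1`.  For every `ε > 0` there is `M` such that for all `m ≥ M` there
EXISTS a vector `k` maximizing the egalitarian welfare `min_a EU^k(a)` among the vectors of
nonnegative integers summing to `m`, whose relative spread
`(max_a EU^k(a) - min_a EU^k(a)) / (∑_a EU^k(a))` is below `ε`. -/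
theorem borda_egalitarian_optima_equalize (n : ℕ) (hn : 0 < n) :
    ∀ ε : ℝ, 0 < ε → ∃ M : ℕ, ∀ m : ℕ, M ≤ m →
      ∃ k : ℕ → ℕ, (∑ i ∈ Finset.range n, k i = m) ∧
        (∀ k' : ℕ → ℕ, (∑ i ∈ Finset.range n, k' i = m) →
          (Finset.range n).inf' (Finset.nonempty_range_iff.mpr hn.ne')
              (EUFI n m (bordaScore m) k') ≤
            (Finset.range n).inf' (Finset.nonempty_range_iff.mpr hn.ne')
              (EUFI n m (bordaScore m) k)) ∧
        ((Finset.range n).sup' (Finset.nonempty_range_iff.mpr hn.ne')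
              (EUFI n m (bordaScore m) k) -
            (Finset.range n).inf' (Finset.nonempty_range_iff.mpr hn.ne')
              (EUFI n m (bordaScore m) k)) /
          (∑ i ∈ Finset.range n, EUFI n m (bordaScore m) k i) < ε := by
  obtain ⟨N, rfl⟩ := Nat.exists_eq_add_one.2 hn
  intro ε hε
  set C : ℝ := 1 + totalGift N / 2
  obtain ⟨M, hM⟩ := exists_nat_gt (2 * C / ε)
  refine ⟨M, fun m hm => ?_⟩
  obtain ⟨k, hk, hopt, hspread⟩ := exists_egalitarian_optimum_pickShare_le N m
  refine ⟨k, hk, fun k' hk' => ?_, ?_⟩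
  · rw [inf'_EUFI_bordaScore hk, inf'_EUFI_bordaScore hk']
    gcongr
    exact hopt k' hk'
  · have hm_large : C < ε * (m / 2) := by
      have hlt : 2 * C / ε < m := hM.trans_le (by exact_mod_cast hm)
      rw [div_lt_iff₀' hε] at hlt
      linarith
    have hm_pos : (0 : ℝ) < m / 2 := pos_of_mul_pos_right (lt_trans (by positivity) hm_large) hε.le
    have htotal := half_mul_le_sum_EUFI_bordaScore hk
    rw [inf'_EUFI_bordaScore hk, div_lt_iff₀ (lt_of_lt_of_le (by positivity) htotal)]
    calc _ ≤ (m + 1) * (minShare N k + C) - (m + 1) * minShare N k :=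
          sub_le_sub_right (sup'_EUFI_bordaScore_le hk hspread) _
      _ = (m + 1) * C := by ring
      _ < (m + 1) * (ε * (m / 2)) := by gcongr
      _ ≤ _ := by linarith [mul_le_mul_of_nonneg_left htotal hε.le]
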